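/- Let 1 ≤ M ≤ N and let A = (a_{ij}) ∈ ℝ^{N×N} be such that ∑_{i,j=1}^M a_{ij} v_i v_j > 0 for every nonzero v ∈ ℝ^M. Let B : ℝ^N → ℝ^{N×N}, U ↦ (b_{ij}(U)), be such that for every U ∈ ℝ^N: b_{ij}(U) = b_{ji}(U) for all i, j; b_{ij}(U) ≤ 0 for all i ≠ j; and ∑_{j=1}^N b_{ij}(U) = 0 for every i. Assume further (A1): for every i ∈ {1,…,M} and j ∈ {1,…,N} the map U = (u_1,…,u_N) ↦ b_{ij}(U)(u_j − u_i) is continuous on ℝ^N, and for every i ∈ {1,…,M} and j ∈ {M+1,…,N} the map U ↦ b_{ij}(U) is bounded on ℝ^N. Then for any right-hand side g₁,…,g_M ∈ ℝ and any prescribed boundary values u^b_{M+1},…,u^b_N ∈ ℝ there exists U = (u_1,…,u_N) ∈ ℝ^N with u_i = u^b_i for i = M+1,…,N and ∑_{j=1}^N (a_{ij} + b_{ij}(U)) u_j = g_i for i = 1,…,M. -/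

import Mathlib

/-!
Since `B(U)` has zero row sums, the residual of the `i`-th interior equation can be written
`F_i = ∑_j a_{ij} u_j + ∑_j b_{ij}(U) (u_j - u_i) - g_i`, a continuous function of the interior
values `x ∈ ℝ^M` once the boundary values are inserted. In `⟨F x, x⟩` the interior block of `A`
contributes at least `α ‖x‖²` (`exists_quadratic_lower_bound`), the interior block of `B` is
nonnegative by symmetry (`sum_diffusion_nonneg`), and everything else is at least `-D ‖x‖`, the
coupling `b_{ij} (u^b_j - x_i) x_i` to the boundary because `-b_{ij} x_i² ≥ 0` and `b_{ij}` is
bounded. So `⟨F x, x⟩ > 0` for large `‖x‖`, and `F` has a zero by the well-known corollary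
`exists_zero_of_inner_pos` of Brouwer's theorem.

That corollary is proved analytically, following Milnor and Rogers. If `F` had no zero, blending it
with the identity outside a ball, smoothing and normalising would give a `C¹` map `r` of constant
norm `ρ` with `r = id` on the sphere of radius `ρ`, hence `det Dr = 0` everywhere. On the other
hand, with `φ = r - id` extended by zero, `id + t φ` is for small `t > 0` a bijection of the ball
onto itself, so `∫ det (1 + t Dφ)` over the ball is the volume of the ball. The integrand is a
polynomial in `t`, so the identity persists at `t = 1` (`integral_det_one_add`), which is absurd.
-/

/-! ### Volume invariance for Lipschitz perturbations of the identity -/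

section Brouwer

open Set Metric MeasureTheory
open scoped Topology NNReal

/-- As `det (1 + t A)` is a polynomial in `t` of degree at most `dim E`, Lagrange interpolation
expresses its value at `t = 1` through its values at finitely many points `t ∈ (0, ε)`, with nodes
and weights that do not depend on `A`. -/
theorem exists_det_weights (E : Type*) [NormedAddCommGroup E] [NormedSpace ℝ E]
    [FiniteDimensional ℝ E] {ε : ℝ} (hε : 0 < ε) :
    ∃ (s : Finset ℝ) (w : ℝ → ℝ), (∀ t ∈ s, 0 < t ∧ t < ε) ∧ ∑ t ∈ s, w t = 1 ∧
      ∀ A : E →L[ℝ] E, (1 + A).det = ∑ t ∈ s, w t * (1 + t • A).det := by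
  obtain ⟨s, hs, hcard⟩ :=
    (Ioo_infinite hε).exists_subset_card_eq (Module.finrank ℝ E + 1)
  have hne : s.Nonempty := by rw [← Finset.card_pos]; omega
  have hinj : Set.InjOn (id : ℝ → ℝ) s := Function.injective_id.injOn
  refine ⟨s, fun t => (Lagrange.basis s id t).eval 1, fun t ht => hs ht, ?_, fun A => ?_⟩
  · rw [← Polynomial.eval_finsetSum, Lagrange.sum_basis hinj hne, Polynomial.eval_one]
  · let b := Module.finBasis ℝ E
    let T := LinearMap.toMatrix b b (A : E →ₗ[ℝ] E)
    let p : Polynomial ℝ := ((Polynomial.X : Polynomial ℝ) • T.map Polynomial.C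
      + (1 : Matrix _ _ ℝ).map Polynomial.C).det
    have hp : ∀ t : ℝ, p.eval t = (1 + t • A).det := by
      intro t
      have h : ((1 + t • A : E →L[ℝ] E) : E →ₗ[ℝ] E)
          = LinearMap.id + t • (A : E →ₗ[ℝ] E) := rfl
      rw [ContinuousLinearMap.det, ← LinearMap.det_toMatrix b, h, map_add, map_smul,
        LinearMap.toMatrix_id, ← Polynomial.coe_evalRingHom, RingHom.map_det]
      congr 1
      ext i j
      simp [T, Matrix.one_apply, apply_ite, add_comm, mul_comm t]
    have hdeg : p.degree < s.card := by
      refine lt_of_le_of_lt Polynomial.degree_le_natDegree ?_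
      have := Polynomial.natDegree_det_X_add_C_le T 1
      rw [Fintype.card_fin] at this
      rw [hcard]
      exact_mod_cast Nat.lt_succ_of_le this
    have h1 := congrArg (Polynomial.eval 1) (Lagrange.eq_interpolate hinj hdeg)
    rw [hp, one_smul, Lagrange.interpolate_apply, Polynomial.eval_finsetSum] at h1
    rw [h1]
    refine Finset.sum_congr rfl fun t _ => ?_
    simp only [Polynomial.eval_mul, Polynomial.eval_C, id, hp, mul_comm]

/-- If `φ` is Lipschitz, vanishes outside a ball and is differentiable in it, then
`∫ det D(id + φ)` over the ball is the volume of the ball, even when `id + φ` is not injective. -/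
theorem integral_det_one_add {E : Type*} [NormedAddCommGroup E] [NormedSpace ℝ E]
    [FiniteDimensional ℝ E] [MeasurableSpace E] [BorelSpace E] (μ : Measure E)
    [μ.IsAddHaarMeasure] {R : ℝ} {K : ℝ≥0} {φ : E → E} {φ' : E → E →L[ℝ] E}
    (hlip : LipschitzWith K φ) (hout : ∀ x ∉ ball (0 : E) R, φ x = 0)
    (hφ' : ∀ x ∈ ball (0 : E) R, HasFDerivAt φ (φ' x) x) :
    ∫ x in ball (0 : E) R, (1 + φ' x).det ∂μ = μ.real (ball 0 R) := by
  obtain ⟨δ, hδ, hdet⟩ : ∃ δ > 0, ∀ A : E →L[ℝ] E, ‖A‖ < δ → 0 < (1 + A).det := by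
    have hc : ContinuousAt (fun A : E →L[ℝ] E => (1 + A).det) 0 :=
      (ContinuousLinearMap.continuous_det.comp (continuous_const.add continuous_id)).continuousAt
    have h0 : (0 : ℝ) < (1 + (0 : E →L[ℝ] E)).det := by
      rw [add_zero]
      change (0 : ℝ) < LinearMap.det (LinearMap.id : E →ₗ[ℝ] E)
      simp
    obtain ⟨δ, hδ, h⟩ := Metric.eventually_nhds_iff.1 (hc.eventually (lt_mem_nhds h0))
    exact ⟨δ, hδ, fun A hA => h (by simpa using hA)⟩
  have hK : (0 : ℝ) < K + 1 := by positivity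
  -- For `t` below this threshold, `t φ` is a contraction and `det (1 + t Dφ)` is positive.
  obtain ⟨s, w, hs, hw, hsum⟩ := exists_det_weights E (ε := min 1 δ / (K + 1)) (by positivity)
  have key : ∀ t ∈ s, IntegrableOn (fun x => (1 + t • φ' x).det) (ball (0 : E) R) μ ∧
      ∫ x in ball (0 : E) R, (1 + t • φ' x).det ∂μ = μ.real (ball 0 R) := by
    intro t ht
    obtain ⟨ht0, htε⟩ := hs t ht
    rw [lt_div_iff₀ hK] at htε
    have htK : t * K < min 1 δ := by nlinarith
    let f : E → E := fun x => x + t • φ x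
    have happ : ApproximatesLinearOn f ((ContinuousLinearEquiv.refl ℝ E : E ≃L[ℝ] E) : E →L[ℝ] E)
        univ (t.toNNReal * K) := by
      rw [ApproximatesLinearOn.approximatesLinearOn_iff_lipschitzOnWith]
      refine LipschitzOnWith.of_dist_le_mul fun x _ y _ => ?_
      have h := hlip.dist_le_mul x y
      have : f - ((ContinuousLinearEquiv.refl ℝ E : E ≃L[ℝ] E) : E →L[ℝ] E) = fun x => t • φ x := by
        ext x; simp [f]
      rw [this]
      simp only [dist_smul₀, Real.norm_of_nonneg ht0.le, NNReal.coe_mul, Real.coe_toNNReal _ ht0.le]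
      nlinarith
    have hbij : Function.Bijective f := by
      have hc : Subsingleton E ∨ t.toNNReal * K <
          ‖((ContinuousLinearEquiv.refl ℝ E).symm : E →L[ℝ] E)‖₊⁻¹ := by
        rcases subsingleton_or_nontrivial E with h | h
        · exact Or.inl h
        · right
          have : ‖((ContinuousLinearEquiv.refl ℝ E).symm : E →L[ℝ] E)‖₊ = 1 := by
            rw [← NNReal.coe_inj]
            exact ContinuousLinearMap.norm_id
          rw [this, inv_one, ← NNReal.coe_lt_coe, NNReal.coe_mul, Real.coe_toNNReal _ ht0.le]
          exact htK.trans_le (min_le_left _ _)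
      exact (happ.toHomeomorph f hc).bijective
    have hfout : ∀ x ∉ ball (0 : E) R, f x = x := fun x hx => by simp [f, hout x hx]
    -- A bijection fixing the complement of the ball pointwise maps the ball onto itself.
    have himg : f '' ball (0 : E) R = ball 0 R := by
      have h1 : f '' (ball (0 : E) R)ᶜ = (ball 0 R)ᶜ := by
        exact (image_congr fun x hx => hfout x hx).trans (image_id' _)
      rw [image_compl_eq hbij] at h1
      exact compl_injective h1
    have hderiv : ∀ x ∈ ball (0 : E) R,
        HasFDerivWithinAt f (1 + t • φ' x) (ball (0 : E) R) x := fun x hx =>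
      ((hasFDerivAt_id x).add ((hφ' x hx).const_smul t)).hasFDerivWithinAt
    have habs : EqOn (fun x => |(1 + t • φ' x).det| • (1 : ℝ)) (fun x => (1 + t • φ' x).det)
        (ball (0 : E) R) := by
      intro x hx
      have hn : ‖φ' x‖ ≤ K := (hφ' x hx).le_of_lipschitz hlip
      have : ‖t • φ' x‖ < δ := by
        rw [norm_smul, Real.norm_of_nonneg ht0.le]
        have := min_le_right 1 δ
        nlinarith
      simp [abs_of_pos (hdet _ this)]
    have hint := integrableOn_image_iff_integrableOn_abs_det_fderiv_smul μ measurableSet_ball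
      hderiv hbij.injective.injOn (fun _ => (1 : ℝ))
    have hval := integral_image_eq_integral_abs_det_fderiv_smul μ measurableSet_ball
      hderiv hbij.injective.injOn (fun _ => (1 : ℝ))
    rw [himg] at hint hval
    rw [setIntegral_congr_fun measurableSet_ball habs] at hval
    refine ⟨?_, ?_⟩
    · rw [← integrableOn_congr_fun habs measurableSet_ball]
      exact hint.1 (integrableOn_const measure_ball_lt_top.ne)
    · rw [← hval, setIntegral_const, smul_eq_mul, mul_one]
  rw [setIntegral_congr_fun measurableSet_ball fun x _ => hsum (φ' x)]
  rw [integral_finsetSum _ fun t ht => (key t ht).1.const_mul _]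
  rw [Finset.sum_congr rfl fun t ht => by rw [integral_const_mul, (key t ht).2],
    ← Finset.sum_mul, hw, one_mul]

/-! ### Zeros of continuous vector fields pointing outwards -/

/-- Extending by zero a Lipschitz map that vanishes on the sphere keeps the Lipschitz constant: a
segment from the ball to its complement crosses the sphere. -/
theorem LipschitzOnWith.indicator_ball {E : Type*} [NormedAddCommGroup E] [NormedSpace ℝ E]
    {R : ℝ} {K : ℝ≥0} {h : E → E} (hlip : LipschitzOnWith K h (closedBall 0 R))
    (h0 : ∀ x, ‖x‖ = R → h x = 0) : LipschitzWith K ((ball (0 : E) R).indicator h) := by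
  have mixed : ∀ x ∈ ball (0 : E) R, ∀ y ∉ ball (0 : E) R, dist (h x) 0 ≤ K * dist x y := by
    intro x hx y hy
    rw [mem_ball_zero_iff] at hx hy
    obtain ⟨t, ht, hz⟩ : ∃ t ∈ Icc (0 : ℝ) 1, ‖AffineMap.lineMap x y t‖ = R := by
      have hc : ContinuousOn (fun t : ℝ => ‖(AffineMap.lineMap x y t : E)‖) (Icc 0 1) :=
        (AffineMap.lineMap_continuous.norm).continuousOn
      exact intermediate_value_Icc zero_le_one hc ⟨by simpa using hx.le, by simpa using hy⟩
    rw [← h0 _ hz]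
    refine (hlip.dist_le_mul x (by simpa using hx.le) _ (by simpa using hz.le)).trans ?_
    gcongr
    rw [dist_left_lineMap, Real.norm_of_nonneg ht.1]
    exact mul_le_of_le_one_left dist_nonneg ht.2
  refine LipschitzWith.of_dist_le_mul fun x y => ?_
  by_cases hx : x ∈ ball (0 : E) R <;> by_cases hy : y ∈ ball (0 : E) R
  · rw [indicator_of_mem hx, indicator_of_mem hy]
    exact hlip.dist_le_mul x (ball_subset_closedBall hx) y (ball_subset_closedBall hy)
  · rw [indicator_of_mem hx, indicator_of_notMem hy]
    exact mixed x hx y hy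
  · rw [indicator_of_notMem hx, indicator_of_mem hy, dist_comm, dist_comm x]
    exact mixed y hy x hx
  · rw [indicator_of_notMem hx, indicator_of_notMem hy, dist_self]
    positivity

/-- Differentiating `‖r‖² = R²` shows that `r x` is orthogonal to the range of the derivative, which
therefore is not surjective. -/
theorem det_eq_zero_of_norm_const {E : Type*} [NormedAddCommGroup E] [InnerProductSpace ℝ E]
    [FiniteDimensional ℝ E] {r : E → E} {r' : E →L[ℝ] E} {x : E} {R : ℝ} (hR : 0 < R)
    (hr : HasFDerivAt r r' x) (hn : ∀ y, ‖r y‖ = R) : r'.det = 0 := by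
  by_contra hne
  obtain ⟨v, hv⟩ := (LinearMap.equivOfDetNeZero (r' : E →ₗ[ℝ] E) hne).surjective (r x)
  have hv' : r' v = r x := hv
  have h1 := hr.norm_sq
  simp_rw [hn] at h1
  have h2 := DFunLike.congr_fun (h1.unique (hasFDerivAt_const (R ^ 2) x)) v
  simp [hv', hn, hR.ne'] at h2

/-- A form of Brouwer's fixed point theorem: a continuous vector field that has positive inner
product with the position vector outside a ball has a zero. -/
theorem exists_zero_of_inner_pos {E : Type*} [NormedAddCommGroup E] [InnerProductSpace ℝ E]
    [FiniteDimensional ℝ E] {F : E → E} (hF : Continuous F) {R : ℝ} (hR : 0 < R)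
    (hpos : ∀ x, R ≤ ‖x‖ → 0 < inner ℝ (F x) x) : ∃ x, F x = 0 := by
  by_contra! hne
  let χ : ContDiffBump (0 : E) := ⟨R, R + 1, hR, by linarith⟩
  let f : E → E := fun x => χ x • F x + (1 - χ x) • x
  have hfc : Continuous f := by
    have := χ.continuous
    fun_prop
  have hfne : ∀ x, f x ≠ 0 := by
    intro x hx
    rcases le_total ‖x‖ R with h | h
    · have : χ x = 1 := χ.one_of_mem_closedBall (by simpa using h)
      exact hne x (by simpa [f, this] using hx)
    · have h1 : inner ℝ (f x) x = χ x * inner ℝ (F x) x + (1 - χ x) * ‖x‖ ^ 2 := by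
        simp [f, inner_add_left, real_inner_smul_left]
      have h2 := hpos x h
      have h3 : 0 < ‖x‖ ^ 2 := by have := hR.trans_le h; positivity
      have h4 := χ.nonneg (x := x)
      have h5 := χ.le_one (x := x)
      rw [hx, inner_zero_left] at h1
      rcases h4.eq_or_lt with h6 | h6
      · rw [← h6] at h1; linarith
      · nlinarith [mul_pos h6 h2, mul_nonneg (sub_nonneg.2 h5) h3.le]
  have hfout : ∀ x, R + 1 < ‖x‖ → f x = x := by
    intro x hx
    have : χ x = 0 := χ.zero_of_le_dist (by simpa using hx.le)
    simp [f, this]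
  -- A smoothing `g` of `f`, still equal to the identity far out; the error bound `‖f x‖` at `x`
  -- keeps `g` free of zeros.
  obtain ⟨g, hg, hgf, hgout, -⟩ := hfc.exists_contDiff_approx_and_eqOn 1 hfc.norm
    (fun x => norm_pos_iff.2 (hfne x)) (S := {x | R + 2 ≤ ‖x‖}) (U := {x | R + 1 < ‖x‖})
    (isClosed_le continuous_const continuous_norm)
    ((isOpen_lt continuous_const continuous_norm).mem_nhdsSet.2 fun x (hx : R + 2 ≤ ‖x‖) =>
      show R + 1 < ‖x‖ by linarith)
    (contDiffOn_id.congr hfout)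
  have hgne : ∀ x, g x ≠ 0 := by
    intro x hx
    have := hgf x
    rw [hx, dist_zero_left] at this
    exact lt_irrefl _ this
  set ρ := R + 2 with hρ
  have hρ0 : 0 < ρ := by linarith
  let r : E → E := fun x => ρ • (‖g x‖⁻¹ • g x)
  have hr : ContDiff ℝ 1 r := contDiff_const.smul (((hg.norm ℝ hgne).inv fun x =>
    (norm_pos_iff.2 (hgne x)).ne').smul hg)
  have hrn : ∀ x, ‖r x‖ = ρ := by
    intro x
    have := norm_ne_zero_iff.2 (hgne x)
    simp [r, norm_smul, this, abs_of_pos hρ0]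
  have hrs : ∀ x, ‖x‖ = ρ → r x - x = 0 := by
    intro x hx
    have h1 : g x = x := (hgout (show R + 2 ≤ ‖x‖ from hx.ge)).trans (hfout x (by linarith))
    simp [r, h1, hx, smul_smul, hρ0.ne']
  obtain ⟨K, hK⟩ := (hr.sub contDiff_id).contDiffOn.exists_lipschitzOnWith one_ne_zero
    (convex_closedBall (0 : E) ρ) (isCompact_closedBall 0 ρ)
  borelize E
  have hrd : ∀ x, HasFDerivAt r (fderiv ℝ r x) x := fun x =>
    (hr.differentiable one_ne_zero x).hasFDerivAt
  have key := integral_det_one_add (Measure.addHaar : Measure E) (hK.indicator_ball hrs)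
    (fun x hx => indicator_of_notMem hx _) (φ' := fun x => fderiv ℝ r x - 1) fun x hx =>
      ((hrd x).sub (hasFDerivAt_id x)).congr_of_eventuallyEq
        (Filter.eventually_of_mem (isOpen_ball.mem_nhds hx) fun y hy => indicator_of_mem hy _)
  simp only [add_sub_cancel, fun x => det_eq_zero_of_norm_const hρ0 (hrd x) hrn,
    integral_zero] at key
  exact (ENNReal.toReal_pos (measure_ball_pos _ _ hρ0).ne' measure_ball_lt_top.ne).ne key

end Brouwer

/-! ### The two signed blocks of the stabilized system -/

theorem exists_quadratic_lower_bound {ι : Type*} [Fintype ι] [Nonempty ι] (a : ι → ι → ℝ)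
    (ha : ∀ v : ι → ℝ, v ≠ 0 → 0 < ∑ i, ∑ j, a i j * v i * v j) :
    ∃ α > 0, ∀ x : EuclideanSpace ℝ ι, α * ‖x‖ ^ 2 ≤ ∑ i, ∑ j, a i j * x i * x j := by
  have hc : Continuous fun x : EuclideanSpace ℝ ι => ∑ i, ∑ j, a i j * x i * x j := by fun_prop
  obtain ⟨z, hz, hmin⟩ := (isCompact_sphere (0 : EuclideanSpace ℝ ι) 1).exists_isMinOn
    (NormedSpace.sphere_nonempty.2 zero_le_one) hc.continuousOn
  have hz1 : ‖z‖ = 1 := by simpa using hz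
  have hz0 : z.ofLp ≠ 0 := by
    intro h
    have : z = 0 := by ext i; exact congrFun h i
    simp [this] at hz1
  refine ⟨_, ha z hz0, fun x => ?_⟩
  rcases eq_or_ne x 0 with rfl | hx
  · simp
  have hn : 0 < ‖x‖ := norm_pos_iff.2 hx
  have h := hmin (show ‖x‖⁻¹ • x ∈ Metric.sphere (0 : EuclideanSpace ℝ ι) 1 by
    simp [norm_smul, hn.ne'])
  have h2 : ∑ i, ∑ j, a i j * (‖x‖⁻¹ • x) i * (‖x‖⁻¹ • x) j
      = (∑ i, ∑ j, a i j * x i * x j) / ‖x‖ ^ 2 := by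
    rw [Finset.sum_div]
    refine Finset.sum_congr rfl fun i _ => ?_
    rw [Finset.sum_div]
    refine Finset.sum_congr rfl fun j _ => ?_
    simp only [PiLp.smul_apply, smul_eq_mul]
    field_simp
  simp only [Set.mem_ofPred_eq, h2] at h
  rwa [le_div_iff₀ (by positivity)] at h

/-- The sum equals `-½ ∑_{i,j} b_{ij} (x_i - x_j)²`. -/
theorem sum_diffusion_nonneg {ι : Type*} [Fintype ι] (b : ι → ι → ℝ)
    (hsym : ∀ i j, b i j = b j i) (hoff : ∀ i j, i ≠ j → b i j ≤ 0) (x : ι → ℝ) :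
    0 ≤ ∑ i, ∑ j, b i j * (x j - x i) * x i := by
  have h1 : ∑ i, ∑ j, b i j * (x j - x i) * x i = ∑ i, ∑ j, b i j * (x i - x j) * x j := by
    rw [Finset.sum_comm]
    exact Finset.sum_congr rfl fun i _ => Finset.sum_congr rfl fun j _ => by rw [hsym]
  have h2 : 0 ≤ ∑ i, ∑ j, b i j * (x j - x i) * x i + ∑ i, ∑ j, b i j * (x i - x j) * x j := by
    simp only [← Finset.sum_add_distrib]
    refine Finset.sum_nonneg fun i _ => Finset.sum_nonneg fun j _ => ?_
    rcases eq_or_ne i j with rfl | hij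
    · simp
    · nlinarith [mul_nonneg (neg_nonneg.2 (hoff i j hij)) (sq_nonneg (x i - x j))]
  linarith

/-! ### Solvability of the nonlinear system -/

/-- Existence of a solution of the nonlinear algebraically stabilized problem
`∑_j (a_{ij} + b_{ij}(U)) u_j = g_i` (for the first `M` "interior" indices),
`u_i = u^b_i` (for the remaining "boundary" indices), under the structural assumptions
(symmetry, nonpositive off-diagonal entries, zero row sums) on the artificial diffusion
matrix `B(U)` and Assumption (A1). -/
theorem algebraically_stabilized_existence
    (N M : ℕ) (hM1 : 1 ≤ M) (hMN : M ≤ N)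
    (A : Fin N → Fin N → ℝ)
    (hA : ∀ v : Fin M → ℝ, v ≠ 0 →
      0 < ∑ i, ∑ j, A (Fin.castLE hMN i) (Fin.castLE hMN j) * v i * v j)
    (B : (Fin N → ℝ) → Fin N → Fin N → ℝ)
    (hsym : ∀ U i j, B U i j = B U j i)
    (hoff : ∀ U, ∀ i j, i ≠ j → B U i j ≤ 0)
    (hrow : ∀ U, ∀ i, ∑ j, B U i j = 0)
    (hA1cont : ∀ i j : Fin N, (i : ℕ) < M →
      Continuous (fun U : Fin N → ℝ => B U i j * (U j - U i)))
    (hA1bdd : ∀ i j : Fin N, (i : ℕ) < M → M ≤ (j : ℕ) →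
      ∃ C : ℝ, ∀ U : Fin N → ℝ, |B U i j| ≤ C)
    (g : Fin N → ℝ) (ub : Fin N → ℝ) :
    ∃ U : Fin N → ℝ,
      (∀ i : Fin N, M ≤ (i : ℕ) → U i = ub i) ∧
      (∀ i : Fin N, (i : ℕ) < M → ∑ j, (A i j + B U i j) * U j = g i) := by
  obtain ⟨L, rfl⟩ := Nat.exists_eq_add_of_le hMN
  have : Nonempty (Fin M) := ⟨⟨0, hM1⟩⟩
  have hlt : ∀ i : Fin M, ((Fin.castAdd L i : Fin (M + L)) : ℕ) < M := fun i => i.2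
  have hle : ∀ j : Fin L, M ≤ ((Fin.natAdd M j : Fin (M + L)) : ℕ) := fun j => by simp
  have hne : ∀ (i : Fin M) (j : Fin L), Fin.castAdd L i ≠ Fin.natAdd M j := fun i j h => by
    have h1 := hlt i
    have h2 := hle j
    rw [h] at h1
    omega
  obtain ⟨α, hα, hcoer⟩ := exists_quadratic_lower_bound
    (fun i j => A (Fin.castAdd L i) (Fin.castAdd L j)) hA
  choose C hC using fun (i : Fin M) (j : Fin L) =>
    hA1bdd (Fin.castAdd L i) (Fin.natAdd M j) (hlt i) (hle j)
  let w : Fin L → ℝ := fun j => ub (Fin.natAdd M j)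
  let U : EuclideanSpace ℝ (Fin M) → Fin (M + L) → ℝ := fun x => Fin.append x.ofLp w
  have hU1 : ∀ x i, U x (Fin.castAdd L i) = x i := fun x i => Fin.append_left _ _ i
  have hU2 : ∀ x j, U x (Fin.natAdd M j) = w j := fun x j => Fin.append_right _ _ j
  have hUc : Continuous U := by
    refine continuous_pi fun k => ?_
    induction k using Fin.addCases with
    | left i => simp only [hU1]; fun_prop
    | right j => simp only [hU2]; fun_prop
  -- The residual map of the interior equations, with the boundary values `w` inserted.
  let F : EuclideanSpace ℝ (Fin M) → EuclideanSpace ℝ (Fin M) := fun x => WithLp.toLp 2 fun i =>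
    ∑ j, A (Fin.castAdd L i) j * U x j
      + ∑ j, B (U x) (Fin.castAdd L i) j * (U x j - U x (Fin.castAdd L i)) - g (Fin.castAdd L i)
  have hFc : Continuous F := by
    refine (PiLp.continuous_toLp 2 _).comp (continuous_pi fun i => ?_)
    refine ((continuous_finsetSum _ fun j _ => ?_).add
      (continuous_finsetSum _ fun j _ => ?_)).sub continuous_const
    · exact continuous_const.mul ((continuous_apply j).comp hUc)
    · exact (hA1cont (Fin.castAdd L i) j (hlt i)).comp hUc
  -- The linear growth rate of the terms of `⟨F x, x⟩` that have no sign.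
  let D : ℝ := ∑ i, ∑ j, |A (Fin.castAdd L i) (Fin.natAdd M j) * w j|
    + ∑ i, ∑ j, C i j * |w j| + ∑ i : Fin M, |g (Fin.castAdd L i)|
  have hbound : ∀ x, α * ‖x‖ ^ 2 - D * ‖x‖ ≤ inner ℝ (F x) x := by
    intro x
    have hx : ∀ i, |x i| ≤ ‖x‖ := fun i => PiLp.norm_apply_le x i
    have hsplit : inner ℝ (F x) x =
        ∑ i, ∑ j, A (Fin.castAdd L i) (Fin.castAdd L j) * x i * x j
        + ∑ i, ∑ j, A (Fin.castAdd L i) (Fin.natAdd M j) * w j * x i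
        + ∑ i, ∑ j, B (U x) (Fin.castAdd L i) (Fin.castAdd L j) * (x j - x i) * x i
        + ∑ i, ∑ j, B (U x) (Fin.castAdd L i) (Fin.natAdd M j) * (w j - x i) * x i
        - ∑ i, g (Fin.castAdd L i) * x i := by
      rw [PiLp.inner_apply]
      rw [← Finset.sum_add_distrib, ← Finset.sum_add_distrib, ← Finset.sum_add_distrib,
        ← Finset.sum_sub_distrib]
      refine Finset.sum_congr rfl fun i _ => ?_
      simp only [F, Fin.sum_univ_add, hU1, hU2, RCLike.inner_apply, conj_trivial]
      rw [← Finset.sum_mul, ← Finset.sum_mul, ← Finset.sum_mul]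
      have h1 : ∑ j, A (Fin.castAdd L i) (Fin.castAdd L j) * x i * x j
          = x i * ∑ j, A (Fin.castAdd L i) (Fin.castAdd L j) * x j := by
        rw [Finset.mul_sum]
        exact Finset.sum_congr rfl fun j _ => by ring
      rw [h1]
      ring
    have hdiff := sum_diffusion_nonneg
      (fun i j => B (U x) (Fin.castAdd L i) (Fin.castAdd L j)) (fun i j => hsym _ _ _)
      (fun i j hij => hoff _ _ _ fun h => hij (Fin.castAdd_injective M L h)) x
    have hAb : -((∑ i, ∑ j, |A (Fin.castAdd L i) (Fin.natAdd M j) * w j|) * ‖x‖)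
        ≤ ∑ i, ∑ j, A (Fin.castAdd L i) (Fin.natAdd M j) * w j * x i := by
      simp only [Finset.sum_mul, ← Finset.sum_neg_distrib]
      refine Finset.sum_le_sum fun i _ => Finset.sum_le_sum fun j _ => ?_
      refine (neg_le_neg ?_).trans (neg_abs_le _)
      rw [abs_mul]
      exact mul_le_mul_of_nonneg_left (hx i) (abs_nonneg _)
    have hBb : -((∑ i, ∑ j, C i j * |w j|) * ‖x‖)
        ≤ ∑ i, ∑ j, B (U x) (Fin.castAdd L i) (Fin.natAdd M j) * (w j - x i) * x i := by
      simp only [Finset.sum_mul, ← Finset.sum_neg_distrib]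
      refine Finset.sum_le_sum fun i _ => Finset.sum_le_sum fun j _ => ?_
      -- Only `b w_j x_i` has to be estimated: the term `-b x_i²` is nonnegative.
      have h1 := hoff (U x) _ _ (hne i j)
      have h2 : |B (U x) (Fin.castAdd L i) (Fin.natAdd M j) * w j * x i| ≤ C i j * |w j| * ‖x‖ := by
        rw [abs_mul, abs_mul]
        have h3 := hC i j (U x)
        have h4 := (abs_nonneg _).trans h3
        exact mul_le_mul (mul_le_mul_of_nonneg_right h3 (abs_nonneg _)) (hx i) (abs_nonneg _)
          (by positivity)
      have h5 := neg_abs_le (B (U x) (Fin.castAdd L i) (Fin.natAdd M j) * w j * x i)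
      nlinarith [mul_nonneg (neg_nonneg.2 h1) (sq_nonneg (x i))]
    have hgb : (∑ i, g (Fin.castAdd L i) * x i) ≤ (∑ i : Fin M, |g (Fin.castAdd L i)|) * ‖x‖ := by
      rw [Finset.sum_mul]
      refine Finset.sum_le_sum fun i _ => (le_abs_self _).trans ?_
      rw [abs_mul]
      exact mul_le_mul_of_nonneg_left (hx i) (abs_nonneg _)
    have hc := hcoer x
    rw [hsplit]
    simp only [D]
    linarith
  obtain ⟨x, hx⟩ := exists_zero_of_inner_pos hFc (R := |D| / α + 1) (by positivity) fun x hx => by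
    refine lt_of_lt_of_le ?_ (hbound x)
    have h1 : 0 < ‖x‖ := lt_of_lt_of_le (by positivity) hx
    have h2 : |D| < α * ‖x‖ := by
      rw [mul_comm, ← div_lt_iff₀ hα]
      linarith
    nlinarith [le_abs_self D]
  refine ⟨U x, fun k hk => ?_, fun k hk => ?_⟩
  · induction k using Fin.addCases with
    | left i => exact absurd (hlt i) (not_lt.2 hk)
    | right j => exact hU2 x j
  · induction k using Fin.addCases with
    | left i =>
      have h1 : (F x) i = 0 := by rw [hx]; rfl
      simp only [F, mul_sub, Finset.sum_sub_distrib] at h1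
      rw [← Finset.sum_mul, hrow, zero_mul, sub_zero] at h1
      simp only [add_mul, Finset.sum_add_distrib]
      linarith
    | right j => exact absurd hk (not_lt.2 (hle j))
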